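/- arXiv:hep-th/9307164 — 3 statements merged into one kernel-verified Lean document; each statement's English description precedes it below -/
import Mathlib

section
/- Let I be a finite type and N : I → I → I → ℕ fusion-rule data satisfying associativity, Σ_{l} N x y l · N l z m = Σ_{l} N y z l · N x l m for all x, y, z, m ∈ I, and commutativity, N x y z = N y x z for all x, y, z ∈ I. Define D x := Σ_{(s,r) ∈ I × I} N x s r. Then for all x, y ∈ I: D x · D y ≥ Σ_{z ∈ I} (N x y z) · D z. -/
open Finset

/-- For associative and commutative fusion-rule data `N` on a finite type `I`, the
function `D x = ∑_{s,r} N x s r` is a weak dimension function: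
`D x * D y ≥ ∑_z N x y z * D z`. -/
theorem stmt5 (I : Type*) [Fintype I] (N : I → I → I → ℕ)
    (hassoc : ∀ x y z m : I,
      ∑ l : I, N x y l * N l z m = ∑ l : I, N y z l * N x l m)
    (hcomm : ∀ x y z : I, N x y z = N y x z) :
    ∀ x y : I,
      (∑ z : I, N x y z * ∑ p : I × I, N z p.1 p.2) ≤
        (∑ p : I × I, N x p.1 p.2) * (∑ p : I × I, N y p.1 p.2) := by
  intro x y
  have h1 : (∑ z : I, N x y z * ∑ p : I × I, N z p.1 p.2)
      = ∑ l : I, (∑ r : I, N x l r) * (∑ s : I, N y s l) := by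
    calc (∑ z : I, N x y z * ∑ p : I × I, N z p.1 p.2)
        = ∑ p : I × I, ∑ z : I, N x y z * N z p.1 p.2 := by
          simp_rw [Finset.mul_sum]
          exact Finset.sum_comm
      _ = ∑ p : I × I, ∑ l : I, N y p.1 l * N x l p.2 :=
          Finset.sum_congr rfl fun p _ => hassoc x y p.1 p.2
      _ = ∑ l : I, ∑ p : I × I, N y p.1 l * N x l p.2 := Finset.sum_comm
      _ = _ := by
          refine Finset.sum_congr rfl fun l _ => ?_
          rw [Fintype.sum_prod_type, mul_comm, Finset.sum_mul_sum]
  have h2 : (∑ p : I × I, N x p.1 p.2) = ∑ l : I, ∑ r : I, N x l r :=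
    Fintype.sum_prod_type _
  have h3 : (∑ p : I × I, N y p.1 p.2) = ∑ l : I, ∑ s : I, N y s l :=
    Fintype.sum_prod_type_right _
  rw [h1, h2, h3, Finset.sum_mul]
  refine Finset.sum_le_sum fun l _ => Nat.mul_le_mul_left _ ?_
  exact Finset.single_le_sum (f := fun l => ∑ s : I, N y s l)
    (fun _ _ => Nat.zero_le _) (Finset.mem_univ l)
end

section
/- Let k be an algebraically closed field and A a finite-dimensional semisimple k-algebra. Let (S_i)_{i ∈ ι} be a complete irredundant family of representatives of the isomorphism classes of simple A-modules (each finite-dimensional over k). Then the k-algebra homomorphism A → Π_{i ∈ ι} End_k(S_i), sending a ∈ A to the family of k-linear maps (m ↦ a • m)_{i ∈ ι}, is bijective. -/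
universe u

/-- Let `k` be an algebraically closed field and `A` a finite-dimensional semisimple
`k`-algebra.  For a complete irredundant family `S i` of representatives of the
isomorphism classes of simple `A`-modules (each finite-dimensional over `k`), the
canonical `k`-algebra homomorphism `A → Π i, End_k (S i)`, `a ↦ (m ↦ a • m)`, is
bijective. -/
theorem stmt8 (k : Type u) [Field k] [IsAlgClosed k]
    (A : Type u) [Ring A] [Algebra k A] [FiniteDimensional k A] [IsSemisimpleRing A]
    (ι : Type u) (S : ι → Type u)
    [∀ i, AddCommGroup (S i)] [∀ i, Module A (S i)] [∀ i, Module k (S i)]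
    [∀ i, IsScalarTower k A (S i)] [∀ i, SMulCommClass A k (S i)]
    [∀ i, FiniteDimensional k (S i)] [∀ i, IsSimpleModule A (S i)]
    (hirr : ∀ i j : ι, Nonempty (S i ≃ₗ[A] S j) → i = j)
    (hcomplete : ∀ (M : Type u) [AddCommGroup M] [Module A M],
      IsSimpleModule A M → ∃ i, Nonempty (M ≃ₗ[A] S i)) :
    Function.Bijective
      (fun a : A => (fun i => DistribMulAction.toLinearMap k (S i) a :
        ∀ i, S i →ₗ[k] S i)) := by
  classical
  constructor
  · intro a b hab
    rw [← sub_eq_zero]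
    set c := a - b with hc
    have h1 : ∀ i (m : S i), c • m = 0 := by
      intro i m
      have := congrArg (fun f => f i m) hab
      change a • m = b • m at this
      rw [hc, sub_smul, this, sub_self]
    have h2 : ∀ x : A, c * x = 0 := by
      intro x
      have hx : x ∈ sSup {m : Submodule A A | IsSimpleModule A m} := by
        rw [IsSemisimpleModule.sSup_simples_eq_top]; trivial
      rw [sSup_eq_iSup'] at hx
      induction hx using Submodule.iSup_induction' with
      | mem m x hx =>
        obtain ⟨i, ⟨e⟩⟩ := hcomplete m.1 m.2
        have : c • (⟨x, hx⟩ : m.1) = 0 := by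
          apply e.injective
          rw [map_smul, h1, map_zero]
        simpa using congrArg Subtype.val this
      | zero => simp
      | add x y _ _ hx hy => rw [mul_add, hx, hy, add_zero]
    simpa using h2 1
  · have hfin : Finite ι := by
      have hid : ∀ i, ∃ I : Ideal A, Nonempty (S i ≃ₗ[A] I) := fun i =>
        IsSemisimpleRing.exists_linearEquiv_ideal_of_isSimpleModule A (S i)
      choose I e using hid
      have hs : ∀ i, IsSimpleModule A (I i) := fun i =>
        IsSimpleModule.congr (e i).some.symm
      let F : ι → isotypicComponents A A := fun i => ⟨isotypicComponent A A (I i), I i, hs i, rfl⟩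
      refine Finite.of_injective F ?_
      intro i j hij
      have hij : isotypicComponent A A (I i) = isotypicComponent A A (I j) :=
        congrArg Subtype.val hij
      have h1 : IsIsotypicOfType A (isotypicComponent A A (I j)) (I j) :=
        IsIsotypicOfType.isotypicComponent A A (I j)
      have h2 := isIsotypicOfType_submodule_iff.mp h1 (I i)
        (hij ▸ Submodule.le_isotypicComponent (I i))
      exact hirr i j ⟨(e i).some.trans (h2.some.trans (e j).some.symm)⟩
    have := Fintype.ofFinite ι
    intro f
    have hoff : ∀ (g : Module.End A (∀ i, S i)) (i j : ι), i ≠ j → ∀ x : S j,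
        g (Pi.single j x) i = 0 := by
      intro g i j hij x
      rcases LinearMap.bijective_or_eq_zero
        ((LinearMap.proj i).comp (g.comp (LinearMap.single A S j))) with h | h
      · exact absurd (hirr j i ⟨LinearEquiv.ofBijective _ h⟩).symm hij
      · exact LinearMap.congr_fun h x
    have hdiag : ∀ (g : Module.End A (∀ i, S i)) (i : ι), ∃ c : k, ∀ x : S i,
        g (Pi.single i x) i = c • x := by
      intro g i
      obtain ⟨c, hc⟩ := (IsSimpleModule.algebraMap_end_bijective_of_isAlgClosed
        (A := A) (V := S i) k).2
        ((LinearMap.proj i).comp (g.comp (LinearMap.single A S i)))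
      exact ⟨c, fun x => (LinearMap.congr_fun hc x).symm⟩
    have hg : ∀ (g : Module.End A (∀ i, S i)), ∃ c : ι → k, ∀ x i, g x i = c i • x i := by
      intro g
      choose c hc using hdiag g
      refine ⟨c, fun x i => ?_⟩
      conv_lhs => rw [← Finset.univ_sum_single x]
      rw [map_sum, Finset.sum_apply, Finset.sum_eq_single i]
      · exact hc i _
      · intro j _ hj
        exact hoff g i j hj.symm _
      · simp
    let F : Module.End (Module.End A (∀ i, S i)) (∀ i, S i) :=
      { toFun := fun x i => f i (x i)
        map_add' := fun x y => by ext i; simp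
        map_smul' := fun g x => by
          obtain ⟨c, hc⟩ := hg g
          ext i
          simp [hc] }
    obtain ⟨s, hs⟩ := Module.Finite.fg_top (R := k) (M := ∀ i, S i)
    obtain ⟨r, hr⟩ := jacobson_density F s
    have key : ∀ x : (∀ i, S i), F x = r • x := by
      intro x
      have hx : x ∈ Submodule.span k (s : Set (∀ i, S i)) := by rw [hs]; trivial
      induction hx using Submodule.span_induction with
      | mem x hx => exact hr x hx
      | zero => simp
      | add x y _ _ hx hy => rw [map_add, hx, hy, smul_add]
      | smul c x _ hx =>
        ext i
        have := congrFun hx i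
        change f i (x i) = r • x i at this
        change f i (c • x i) = r • c • x i
        rw [map_smul, this, smul_comm]
    refine ⟨r, ?_⟩
    ext i x
    have := congrFun (key (Pi.single i x)) i
    change f i (Pi.single i x i) = r • (Pi.single i x : ∀ i, S i) i at this
    rw [Pi.single_eq_same] at this
    exact this.symm
end

section
/- Let k be a field and A a finite-dimensional k-algebra. Consider the forgetful functor V from the category of finite-dimensional A-modules to the category of k-vector spaces, and the canonical k-algebra homomorphism i from A to the algebra of natural endomorphisms of V, sending a ∈ A to the natural transformation whose component at a module M is the k-linear map m ↦ a • m. Then i is injective; and if moreover A is a semisimple algebra, then i is bijective. -/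
universe u

/-- Let `k` be a field and `A` a finite-dimensional `k`-algebra.  The canonical map `i`
from `A` to the algebra of natural endomorphisms of the forgetful functor from
finite-dimensional `A`-modules to `k`-vector spaces (sending `a` to the family of
`k`-linear maps `m ↦ a • m`) is injective; if moreover `A` is semisimple, every natural
endomorphism of the forgetful functor is of this form, i.e. `i` is bijective. -/
theorem stmt13 (k : Type u) [Field k] (A : Type u) [Ring A] [Algebra k A]
    [FiniteDimensional k A] :
    (∀ a b : A,
      (∀ (M : Type u) [AddCommGroup M] [Module A M] [Module k M] [IsScalarTower k A M]
        [FiniteDimensional k M] (m : M), a • m = b • m) → a = b) ∧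
    (IsSemisimpleRing A →
      ∀ h : ∀ (M : Type u) [AddCommGroup M] [Module A M] [Module k M] [IsScalarTower k A M]
          [FiniteDimensional k M], M →ₗ[k] M,
        (∀ (M M' : Type u) [AddCommGroup M] [Module A M] [Module k M] [IsScalarTower k A M]
            [FiniteDimensional k M] [AddCommGroup M'] [Module A M'] [Module k M']
            [IsScalarTower k A M'] [FiniteDimensional k M'] (f : M →ₗ[A] M') (m : M),
          h M' (f m) = f (h M m)) →
        ∃ a : A, ∀ (M : Type u) [AddCommGroup M] [Module A M] [Module k M]
            [IsScalarTower k A M] [FiniteDimensional k M] (m : M),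
          h M m = a • m) := by
  refine ⟨fun a b hab => ?_, fun _ h hn => ⟨h A 1, ?_⟩⟩
  · simpa using hab A 1
  · intro M _ _ _ _ _ m
    simpa using hn A M (LinearMap.toSpanSingleton A M m) 1
end
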